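/- Write $\overline{\mathbb R}=[-\infty,\infty]$, with the conventions $0\cdot\infty=0$ and $\infty+(-\infty)=\infty$. An outer probability content on a set $Y$ is a functional $\mathcal E$ that assigns to every function $f:Y\to\overline{\mathbb R}$ a value $\mathcal E(f)\in\overline{\mathbb R}$ such that, for all $f,g:Y\to\overline{\mathbb R}$: (1) $\mathcal E(f)\le\mathcal E(g)$ whenever $f\le g$ pointwise; (2) $\mathcal E(cf)=c\,\mathcal E(f)$ for every real $c>0$; (3) $\mathcal E(f+g)\le\mathcal E(f)+\mathcal E(g)$; (4) $\mathcal E(c)=c$ for every real constant function $c$. It is a superexpectation if moreover (5) $\mathcal E\bigl(\sum_{k=1}^\infty f_k\bigr)\le\sum_{k=1}^\infty\mathcal E(f_k)$ for every sequence of functions $f_k:Y\to[0,\infty]$. Let $X$ be a nonempty set and let $\mathcal E_1,\mathcal E_2,\dots$ be superexpectations on $X$. Let $\Omega=X^\infty$ be the set of infinite sequences from $X$; its subsets are called events. A situation is a finite sequence $s\in X^*$, $\Gamma(s)\subseteq\Omega$ is the set of infinite sequences extending $s$, and $\omega^n$ is the prefix of length $n$ of $\omega\in\Omega$. A supermartingale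 is a function $S:X^*\to\overline{\mathbb R}$ such that $\mathcal E_n(x\mapsto S(sx))\le S(s)$ for every $n\ge1$ and every situation $s$ of length $n-1$. For $\xi:\Omega\to\overline{\mathbb R}$ and a situation $s$, let $\overline{\mathbb E}(\xi\mid s)$ be the infimum of $S(s)$ over all supermartingales $S$ that are bounded below by a real constant and satisfy $\liminf_{n\to\infty}S(\omega^n)\ge\xi(\omega)$ for all $\omega\in\Gamma(s)$; for an event $A$, let $\overline{\mathbb P}(A\mid s)=\overline{\mathbb E}(\mathbf 1_A\mid s)$. Then for every situation $s$ the functional $\xi\mapsto\overline{\mathbb E}(\xi\mid s)$ is a superexpectation on $\Omega$. In particular, $\overline{\mathbb E}\bigl(\sum_{k=1}^\infty\xi_k\mid s\bigr)\le\sum_{k=1}^\infty\overline{\mathbb E}(\xi_k\mid s)$ for every sequence of functions $\xi_k:\Omega\to[0,\infty]$, and consequently $\overline{\mathbb P}\bigl(\bigcup_{k=1}^\infty A_k\mid s\bigr)\le\sum_{k=1}^\infty\overline{\mathbb P}(A_k\mid s)$ for every sequence of events $A_k\subseteq\Omega$; hence, if $\overline{\mathbb P}(A_k\mid s)=0$ for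 all $k$, then $\overline{\mathbb P}\bigl(\bigcup_{k=1}^\infty A_k\mid s\bigr)=0$. -/

import Mathlib

namespace GTP

noncomputable section

open Filter Topology

/-- Addition on `[-∞, ∞]` with the convention `∞ + (-∞) = ∞`.
(The addition of `EReal` itself has `⊤ + ⊥ = ⊥`; the two agree on all other pairs.) -/
def upAdd (a b : EReal) : EReal := -(-a + -b)

theorem top_upAdd (b : EReal) : upAdd ⊤ b = ⊤ := by simp [upAdd]

theorem upAdd_top (a : EReal) : upAdd a ⊤ = ⊤ := by simp [upAdd]

theorem upAdd_eq_add {a b : EReal} (h1 : a ≠ ⊥ ∨ b ≠ ⊤) (h2 : a ≠ ⊤ ∨ b ≠ ⊥) :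
    upAdd a b = a + b := by
  unfold upAdd
  rw [EReal.neg_add (by simpa using h2) (by simpa using h1), sub_eq_add_neg, neg_neg, neg_neg]

/-- An *outer probability content* on `Y`: a functional on all functions `Y → [-∞, ∞]` that is
monotone, positively homogeneous, subadditive (sums being taken with `∞ + (-∞) = ∞`, both
pointwise and on the values), and that maps every real constant to itself. -/
def IsOPC {Y : Type*} (E : (Y → EReal) → EReal) : Prop :=
  (∀ f g : Y → EReal, (∀ y, f y ≤ g y) → E f ≤ E g) ∧
  (∀ c : ℝ, 0 < c → ∀ f : Y → EReal, E (fun y => (c : EReal) * f y) = (c : EReal) * E f) ∧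
  (∀ f g : Y → EReal, E (fun y => upAdd (f y) (g y)) ≤ upAdd (E f) (E g)) ∧
  (∀ c : ℝ, E (fun _ => (c : EReal)) = (c : EReal))

/-- The sum of a series of nonnegative extended reals, as the supremum of its partial sums.
It is only applied to nonnegative terms. -/
def eseries (a : ℕ → EReal) : EReal := ⨆ n, ∑ k ∈ Finset.range n, a k

theorem tendsto_eseries {a : ℕ → EReal} (ha : ∀ k, 0 ≤ a k) :
    Tendsto (fun n => ∑ k ∈ Finset.range n, a k) atTop (𝓝 (eseries a)) := by
  refine tendsto_atTop_iSup (monotone_nat_of_le_succ fun n => ?_)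
  rw [Finset.sum_range_succ]
  exact le_add_of_nonneg_right (ha n)

/-- A *superexpectation*: an outer probability content that is moreover countably subadditive
on nonnegative functions. -/
def IsSuperexpectation {Y : Type*} (E : (Y → EReal) → EReal) : Prop :=
  IsOPC E ∧
  ∀ f : ℕ → Y → EReal, (∀ k y, 0 ≤ f k y) →
    E (fun y => eseries fun k => f k y) ≤ eseries fun k => E (f k)

/-- The length-`n` prefix `ω^n` of a sequence `ω ∈ Ω = X^∞`. -/
def pre {X : Type*} (ω : ℕ → X) (n : ℕ) : List X := List.ofFn fun i : Fin n => ω i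

/-- `Γ(s)`: the set of infinite extensions of the situation `s`. -/
def Gamma {X : Type*} (s : List X) : Set (ℕ → X) := {ω | pre ω s.length = s}

/-- A *supermartingale*. Here `E n` governs the trial that follows a situation of length `n`,
so that `E 0, E 1, …` are `E_1, E_2, …` of the usual numbering. -/
def IsSupermartingale {X : Type*} (E : ℕ → (X → EReal) → EReal) (S : List X → EReal) : Prop :=
  ∀ s : List X, E s.length (fun x => S (s ++ [x])) ≤ S s

/-- An extended-real-valued function that is bounded below by a real constant. -/
def BddBelowFn {Y : Type*} (S : Y → EReal) : Prop := ∃ c : ℝ, ∀ t, (c : EReal) ≤ S t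

/-- The conditional upper expectation `Ē(ξ | s)`. -/
def upExp {X : Type*} (E : ℕ → (X → EReal) → EReal) (ξ : (ℕ → X) → EReal) (s : List X) : EReal :=
  sInf {a | ∃ S : List X → EReal, IsSupermartingale E S ∧ BddBelowFn S ∧
    (∀ ω ∈ Gamma s, ξ ω ≤ liminf (fun n => S (pre ω n)) atTop) ∧ S s = a}

/-- The conditional upper probability `P̄(A | s)`: the upper expectation of the indicator. -/
def upProb {X : Type*} (E : ℕ → (X → EReal) → EReal) (A : Set (ℕ → X)) (s : List X) : EReal :=
  upExp E (A.indicator fun _ => 1) s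

end

end GTP

/-!
`Ē(ξ | s)` is the infimum of the initial capitals `S s` of the bounded-below supermartingales `S`
that superhedge `ξ` on `Γ(s)`, so the upper bounds come from operations on superhedges: a constant,
a positive multiple, a sum and a series of superhedges are again superhedges. For lower bounds, a
supermartingale whose value is below `a` has a next value below `a`, hence stays below `a` along a
whole path; so if its lower limits on `Γ(s)` are at least `a`, it starts with at least `a`. Applied
at every extension of `s`, this shows that a superhedge of `ξ ≥ 0` is nonnegative from `s` on, and
off the extensions of `s` it may be replaced by `∞`. For countable subadditivity, choose such
nonnegative superhedges with initial capitals slightly above `Ē(ξ k | s)`, with summable errors, and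
add them up: the sum is a supermartingale because the `E n` are superexpectations, and it
superhedges `∑ ξ k` by Fatou's lemma for series.
-/

namespace GTP

open Filter

section UpAdd

variable {a b c : EReal}

theorem upAdd_mono {a' b' : EReal} (ha : a ≤ a') (hb : b ≤ b') : upAdd a b ≤ upAdd a' b' :=
  EReal.neg_le_neg_iff.2 (add_le_add (EReal.neg_le_neg_iff.2 ha) (EReal.neg_le_neg_iff.2 hb))

theorem upAdd_eq_add_of_ne_bot (ha : a ≠ ⊥) (hb : b ≠ ⊥) : upAdd a b = a + b :=
  upAdd_eq_add (.inl ha) (.inr hb)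

theorem add_le_upAdd (a b : EReal) : a + b ≤ upAdd a b := by
  rcases eq_or_ne a ⊥ with rfl | ha
  · simp
  rcases eq_or_ne b ⊥ with rfl | hb
  · simp
  exact (upAdd_eq_add_of_ne_bot ha hb).ge

theorem le_upAdd_of_forall_gt (h : ∀ a' > a, ∀ b' > b, c ≤ upAdd a' b') : c ≤ upAdd a b := by
  rcases eq_or_ne a ⊤ with rfl | ha
  · simp [top_upAdd]
  rcases eq_or_ne b ⊤ with rfl | hb
  · simp [upAdd_top]
  rw [upAdd_eq_add (.inr hb) (.inl ha)]
  refine EReal.le_add_of_forall_gt (.inr hb) (.inl ha) fun a' ha' b' hb' => ?_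
  exact (h a' ha' b' hb').trans_eq (upAdd_eq_add_of_ne_bot ha'.ne_bot hb'.ne_bot)

theorem upAdd_liminf_le {ι : Type*} {l : Filter ι} {u v : ι → EReal} (hu : liminf u l ≠ ⊥)
    (hv : liminf v l ≠ ⊥) :
    upAdd (liminf u l) (liminf v l) ≤ liminf (fun i => upAdd (u i) (v i)) l :=
  calc upAdd (liminf u l) (liminf v l)
      = liminf u l + liminf v l := upAdd_eq_add_of_ne_bot hu hv
    _ ≤ liminf (u + v) l := EReal.le_liminf_add
    _ ≤ liminf (fun i => upAdd (u i) (v i)) l :=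
        liminf_le_liminf (.of_forall fun i => add_le_upAdd (u i) (v i))

end UpAdd

section Series

variable {a b : ℕ → EReal}

theorem eseries_mono (h : ∀ k, a k ≤ b k) : eseries a ≤ eseries b :=
  iSup_mono fun _ => Finset.sum_le_sum fun k _ => h k

theorem sum_range_le_eseries (a : ℕ → EReal) (n : ℕ) :
    ∑ k ∈ Finset.range n, a k ≤ eseries a :=
  le_iSup (fun n => ∑ k ∈ Finset.range n, a k) n

theorem eseries_nonneg (a : ℕ → EReal) : 0 ≤ eseries a :=
  sum_range_le_eseries a 0

theorem le_eseries (ha : ∀ k, 0 ≤ a k) (k : ℕ) : a k ≤ eseries a :=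
  (Finset.single_le_sum (fun i _ => ha i) (Finset.self_mem_range_succ k)).trans
    (sum_range_le_eseries a (k + 1))

theorem eseries_add_le (a b : ℕ → EReal) :
    eseries (fun k => a k + b k) ≤ eseries a + eseries b := by
  refine iSup_le fun n => ?_
  rw [Finset.sum_add_distrib]
  exact add_le_add (sum_range_le_eseries a n) (sum_range_le_eseries b n)

theorem eseries_coe_le_of_hasSum {r : ℕ → ℝ} {x : ℝ} (hr : ∀ k, 0 ≤ r k) (h : HasSum r x) :
    eseries (fun k => (r k : EReal)) ≤ x := by
  refine iSup_le fun n => ?_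
  have coe_sum : ((∑ k ∈ Finset.range n, r k : ℝ) : EReal) = ∑ k ∈ Finset.range n, (r k : EReal) :=
    map_sum (⟨⟨Real.toEReal, EReal.coe_zero⟩, EReal.coe_add⟩ : ℝ →+ EReal) r _
  rw [← coe_sum, EReal.coe_le_coe_iff]
  exact sum_le_hasSum _ (fun k _ => hr k) h

theorem exists_forall_lt_eseries_le (ha : ∀ k, 0 ≤ a k) {c : EReal} (h : eseries a < c) :
    ∃ b : ℕ → EReal, (∀ k, a k < b k) ∧ eseries b ≤ c := by
  obtain ⟨d, had, hdc⟩ := EReal.lt_iff_exists_real_btwn.1 h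
  obtain ⟨A, hA⟩ : ∃ A : ℝ, (A : EReal) = eseries a :=
    ⟨_, EReal.coe_toReal had.ne_top ((EReal.bot_lt_zero.trans_le (eseries_nonneg a)).ne')⟩
  have hAd : 0 < d - A := sub_pos.2 (by rwa [← hA, EReal.coe_lt_coe_iff] at had)
  obtain ⟨ε, hε, x, hx, hxd⟩ := posSumOfEncodable hAd ℕ
  refine ⟨fun k => a k + ε k, fun k => ?_, ?_⟩
  · have hk_top : a k ≠ ⊤ := ((le_eseries ha k).trans_lt h).ne_top
    have hk_bot : a k ≠ ⊥ := (EReal.bot_lt_zero.trans_le (ha k)).ne'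
    simpa only [EReal.coe_toReal hk_top hk_bot, add_zero] using
      EReal.add_lt_add_left_coe (EReal.coe_pos.2 (hε k)) (a k).toReal
  · calc eseries (fun k => a k + ε k)
        ≤ eseries a + eseries (fun k => (ε k : EReal)) := eseries_add_le _ _
      _ ≤ A + x := add_le_add hA.ge (eseries_coe_le_of_hasSum (fun k => (hε k).le) hx)
      _ ≤ d := by rw [← EReal.coe_add, EReal.coe_le_coe_iff]; linarith
      _ ≤ c := hdc.le

theorem sum_liminf_le_liminf_sum {ι κ : Type*} {l : Filter ι} (F : Finset κ) (u : κ → ι → EReal) :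
    ∑ k ∈ F, liminf (u k) l ≤ liminf (fun i => ∑ k ∈ F, u k i) l := by
  classical
  induction F using Finset.induction_on with
  | empty => exact le_liminf_of_le (h := .of_forall fun _ => le_rfl)
  | insert k F hk ih =>
    simp only [Finset.sum_insert hk]
    exact (add_le_add_right ih _).trans EReal.le_liminf_add

theorem eseries_liminf_le_liminf_eseries {ι : Type*} {l : Filter ι} (u : ℕ → ι → EReal) :
    eseries (fun k => liminf (u k) l) ≤ liminf (fun i => eseries fun k => u k i) l :=
  iSup_le fun n => (sum_liminf_le_liminf_sum _ u).trans
    (liminf_le_liminf (.of_forall fun i => sum_range_le_eseries (fun k => u k i) n))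

theorem indicator_iUnion_le_eseries {Y : Type*} (A : ℕ → Set Y) (y : Y) :
    (⋃ k, A k).indicator (fun _ => (1 : EReal)) y ≤
      eseries fun k => (A k).indicator (fun _ => 1) y := by
  refine Set.indicator_apply_le' (fun hy => ?_) fun _ => eseries_nonneg _
  obtain ⟨k, hk⟩ := Set.mem_iUnion.1 hy
  calc (1 : EReal) = (A k).indicator (fun _ => 1) y := by rw [Set.indicator_of_mem hk]
    _ ≤ eseries fun k => (A k).indicator (fun _ => 1) y :=
        le_eseries (fun k => Set.indicator_nonneg (fun _ _ => zero_le_one) y) k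

end Series

section BddBelowFn

variable {Y : Type*} {f g : Y → EReal}

theorem BddBelowFn.const_mul (hf : BddBelowFn f) {c : ℝ} (hc : 0 ≤ c) :
    BddBelowFn (fun y => (c : EReal) * f y) := by
  obtain ⟨b, hb⟩ := hf
  refine ⟨c * b, fun y => ?_⟩
  rw [EReal.coe_mul]
  exact mul_le_mul_of_nonneg_left (hb y) (EReal.coe_nonneg.2 hc)

theorem BddBelowFn.upAdd (hf : BddBelowFn f) (hg : BddBelowFn g) :
    BddBelowFn (fun y => upAdd (f y) (g y)) := by
  obtain ⟨b, hb⟩ := hf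
  obtain ⟨c, hc⟩ := hg
  refine ⟨b + c, fun y => ?_⟩
  rw [EReal.coe_add]
  exact (add_le_upAdd _ _).trans (upAdd_mono (hb y) (hc y))

theorem BddBelowFn.liminf_comp_ne_bot (hf : BddBelowFn f) {ι : Type*} (l : Filter ι) (u : ι → Y) :
    liminf (fun i => f (u i)) l ≠ ⊥ := by
  obtain ⟨b, hb⟩ := hf
  have hle : (b : EReal) ≤ liminf (fun i => f (u i)) l :=
    le_liminf_of_le (h := .of_forall fun i => hb (u i))
  exact ((EReal.bot_lt_coe b).trans_le hle).ne'

end BddBelowFn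

section Prefix

variable {X : Type*} {s t : List X}

@[simp] theorem length_pre (ω : ℕ → X) (n : ℕ) : (pre ω n).length = n :=
  List.length_ofFn

theorem pre_isPrefix_pre (ω : ℕ → X) {m n : ℕ} (h : m ≤ n) : pre ω m <+: pre ω n := by
  rw [List.prefix_iff_eq_take]
  exact List.ext_getElem (by simp [h]) fun i _ _ => by simp [pre]

theorem Gamma_anti (h : s <+: t) : Gamma t ⊆ Gamma s := by
  intro ω (hω : pre ω t.length = t)
  have hpre : pre ω s.length <+: t := by
    simpa only [hω] using pre_isPrefix_pre ω h.length_le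
  exact (List.prefix_of_prefix_length_le hpre h (by simp)).eq_of_length (by simp)

theorem exists_pre_eq_of_isPrefix_succ {u : ℕ → List X} {m : ℕ}
    (hlen : ∀ k, (u k).length = m + k) (hu : ∀ k, u k <+: u (k + 1)) :
    ∃ ω, ∀ k, pre ω (m + k) = u k := by
  have mono : ∀ {k n}, k ≤ n → u k <+: u n := fun h =>
    Nat.le_induction List.prefix_rfl (fun n _ ih => ih.trans (hu n)) _ h
  refine ⟨fun n => (u (n + 1))[n]'(by grind), fun k => ?_⟩
  refine List.ext_getElem (by simp [hlen]) fun i _ _ => ?_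
  simp only [pre, List.getElem_ofFn]
  rcases le_total (i + 1) k with h | h
  · exact (mono h).getElem _
  · exact ((mono h).getElem _).symm

theorem exists_mem_Gamma_forall_pre {p : List X → Prop} (hs : p s)
    (step : ∀ t, p t → ∃ x, p (t ++ [x])) : ∃ ω ∈ Gamma s, ∀ n ≥ s.length, p (pre ω n) := by
  choose x hx using fun t : {t // p t} => step t t.2
  let u : ℕ → {t // p t} := fun k => (fun t => ⟨t ++ [x t], hx t⟩)^[k] ⟨s, hs⟩
  have u_succ : ∀ k, (u (k + 1)).1 = (u k).1 ++ [x (u k)] := fun k => by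
    simp only [u, Function.iterate_succ_apply']
  have u_length : ∀ k, (u k).1.length = s.length + k := fun k => by
    induction k with
    | zero => rfl
    | succ k ih => simp only [u_succ, List.length_append, ih, List.length_singleton, add_assoc]
  obtain ⟨ω, hω⟩ := exists_pre_eq_of_isPrefix_succ (u := fun k => (u k).1) u_length
    fun k => u_succ k ▸ List.prefix_append _ _
  refine ⟨ω, hω 0, fun n hn => ?_⟩
  obtain ⟨k, rfl⟩ := Nat.exists_eq_add_of_le hn
  exact hω k ▸ (u k).2

end Prefix

section OuterProbabilityContent

variable {Y : Type*} {F : (Y → EReal) → EReal} {f g : Y → EReal}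

theorem IsOPC.mono (hF : IsOPC F) (h : ∀ y, f y ≤ g y) : F f ≤ F g :=
  hF.1 f g h

theorem IsOPC.map_const_mul (hF : IsOPC F) {c : ℝ} (hc : 0 < c) (f : Y → EReal) :
    F (fun y => (c : EReal) * f y) = c * F f :=
  hF.2.1 c hc f

theorem IsOPC.map_upAdd_le (hF : IsOPC F) (f g : Y → EReal) :
    F (fun y => upAdd (f y) (g y)) ≤ upAdd (F f) (F g) :=
  hF.2.2.1 f g

theorem IsOPC.map_const (hF : IsOPC F) (c : ℝ) : F (fun _ => (c : EReal)) = c :=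
  hF.2.2.2 c

theorem IsOPC.le_map_of_forall_le (hF : IsOPC F) {a : EReal} (h : ∀ y, a ≤ f y) : a ≤ F f :=
  EReal.ge_of_forall_gt_iff_ge.1 fun c hc =>
    (hF.map_const c).ge.trans (hF.mono fun y => hc.le.trans (h y))

end OuterProbabilityContent

section Supermartingale

variable {X : Type*} {E : ℕ → (X → EReal) → EReal} {S T : List X → EReal} {s : List X} {a : EReal}

theorem isSupermartingale_const (hE : ∀ n, IsOPC (E n)) (c : ℝ) :
    IsSupermartingale E (fun _ => (c : EReal)) := fun t =>
  ((hE t.length).map_const c).le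

theorem IsSupermartingale.const_mul (hE : ∀ n, IsOPC (E n)) (hS : IsSupermartingale E S)
    {c : ℝ} (hc : 0 < c) : IsSupermartingale E (fun t => (c : EReal) * S t) := fun t =>
  ((hE t.length).map_const_mul hc _).trans_le
    (mul_le_mul_of_nonneg_left (hS t) (EReal.coe_nonneg.2 hc.le))

theorem IsSupermartingale.upAdd (hE : ∀ n, IsOPC (E n)) (hS : IsSupermartingale E S)
    (hT : IsSupermartingale E T) : IsSupermartingale E (fun t => upAdd (S t) (T t)) := fun t =>
  ((hE t.length).map_upAdd_le _ _).trans (upAdd_mono (hS t) (hT t))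

theorem IsSupermartingale.eseries (hE : ∀ n, IsSuperexpectation (E n)) {S : ℕ → List X → EReal}
    (hS : ∀ k, IsSupermartingale E (S k)) (hS₀ : ∀ k t, 0 ≤ S k t) :
    IsSupermartingale E (fun t => eseries fun k => S k t) := fun t =>
  ((hE t.length).2 _ fun k _ => hS₀ k _).trans (eseries_mono fun k => hS k t)

open Classical in
/-- The function on situations that agrees with `S` on the extensions of `s` and is `∞` elsewhere.
Since a superhedge at `s` is constrained only on `Γ(s)`, this lets one discard its values off the
extensions of `s`. -/
noncomputable def topOutside (s : List X) (S : List X → EReal) (t : List X) : EReal :=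
  if s <+: t then S t else ⊤

theorem topOutside_of_isPrefix {t : List X} (h : s <+: t) : topOutside s S t = S t :=
  if_pos h

theorem topOutside_of_not_isPrefix {t : List X} (h : ¬ s <+: t) : topOutside s S t = ⊤ :=
  if_neg h

theorem le_topOutside (s : List X) (S : List X → EReal) (t : List X) : S t ≤ topOutside s S t := by
  by_cases h : s <+: t
  · exact (topOutside_of_isPrefix h).ge
  · exact (topOutside_of_not_isPrefix h).ge.trans' le_top

theorem IsSupermartingale.topOutside (hS : IsSupermartingale E S) (s : List X) :
    IsSupermartingale E (topOutside s S) := by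
  intro t
  by_cases ht : s <+: t
  · simp only [topOutside_of_isPrefix ht,
      topOutside_of_isPrefix (ht.trans (List.prefix_append _ _))]
    exact hS t
  · exact (topOutside_of_not_isPrefix ht).ge.trans' le_top

theorem IsSupermartingale.exists_lt_append (hE : ∀ n, IsOPC (E n)) (hS : IsSupermartingale E S)
    (h : S s < a) : ∃ x, S (s ++ [x]) < a := by
  by_contra! hle
  exact (((hE s.length).le_map_of_forall_le hle).trans (hS s)).not_gt h

theorem IsSupermartingale.exists_mem_Gamma_forall_lt (hE : ∀ n, IsOPC (E n))
    (hS : IsSupermartingale E S) (h : S s < a) :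
    ∃ ω ∈ Gamma s, ∀ n ≥ s.length, S (pre ω n) < a :=
  exists_mem_Gamma_forall_pre (p := fun t => S t < a) h fun _ => hS.exists_lt_append hE

theorem IsSupermartingale.le_of_forall_le_liminf (hE : ∀ n, IsOPC (E n))
    (hS : IsSupermartingale E S)
    (h : ∀ ω ∈ Gamma s, a ≤ liminf (fun n => S (pre ω n)) atTop) : a ≤ S s := by
  by_contra! hlt
  obtain ⟨d, hSd, hda⟩ := exists_between hlt
  obtain ⟨ω, hω, hpath⟩ := hS.exists_mem_Gamma_forall_lt hE hSd
  have hle : liminf (fun n => S (pre ω n)) atTop ≤ d :=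
    liminf_le_of_frequently_le'
      ((eventually_ge_atTop s.length).mono fun n hn => (hpath n hn).le).frequently
  exact ((h ω hω).trans hle).not_gt hda

end Supermartingale

section Superhedge

variable {X : Type*} {E : ℕ → (X → EReal) → EReal} {s : List X} {ξ η : (ℕ → X) → EReal}
  {S T : List X → EReal}

/-- `S` superhedges `ξ` in the situation `s`: it is a bounded-below supermartingale whose lower
limit dominates `ξ` on `Γ(s)`. The conditional upper expectation `Ē(ξ | s)` is the infimum of `S s`
over these `S`. -/
structure IsSuperhedge (E : ℕ → (X → EReal) → EReal) (ξ : (ℕ → X) → EReal) (s : List X)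
    (S : List X → EReal) : Prop where
  isSupermartingale : IsSupermartingale E S
  bddBelowFn : BddBelowFn S
  le_liminf : ∀ ω ∈ Gamma s, ξ ω ≤ liminf (fun n => S (pre ω n)) atTop

theorem IsSuperhedge.mono (hS : IsSuperhedge E η s S) (h : ∀ ω ∈ Gamma s, ξ ω ≤ η ω) :
    IsSuperhedge E ξ s S :=
  ⟨hS.isSupermartingale, hS.bddBelowFn, fun ω hω => (h ω hω).trans (hS.le_liminf ω hω)⟩

theorem IsSuperhedge.le_of_forall_le (hE : ∀ n, IsOPC (E n)) (hS : IsSuperhedge E ξ s S)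
    {a : EReal} (h : ∀ ω ∈ Gamma s, a ≤ ξ ω) : a ≤ S s :=
  hS.isSupermartingale.le_of_forall_le_liminf hE fun ω hω => (h ω hω).trans (hS.le_liminf ω hω)

theorem IsSuperhedge.of_isPrefix (hS : IsSuperhedge E ξ s S) {t : List X} (h : s <+: t) :
    IsSuperhedge E ξ t S :=
  ⟨hS.isSupermartingale, hS.bddBelowFn, fun ω hω => hS.le_liminf ω (Gamma_anti h hω)⟩

theorem isSuperhedge_const (hE : ∀ n, IsOPC (E n)) (s : List X) (c : ℝ) :
    IsSuperhedge E (fun _ => (c : EReal)) s (fun _ => (c : EReal)) :=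
  ⟨isSupermartingale_const hE c, ⟨c, fun _ => le_rfl⟩, fun _ _ => (liminf_const _).ge⟩

theorem IsSuperhedge.const_mul (hE : ∀ n, IsOPC (E n)) (hS : IsSuperhedge E ξ s S) {c : ℝ}
    (hc : 0 < c) :
    IsSuperhedge E (fun ω => (c : EReal) * ξ ω) s (fun t => (c : EReal) * S t) where
  isSupermartingale := hS.isSupermartingale.const_mul hE hc
  bddBelowFn := hS.bddBelowFn.const_mul hc.le
  le_liminf ω hω := by
    have hc₀ : (0 : EReal) ≤ c := EReal.coe_nonneg.2 hc.le
    rw [EReal.liminf_const_mul_of_nonneg_of_ne_top hc₀ (EReal.coe_ne_top c)]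
    exact mul_le_mul_of_nonneg_left (hS.le_liminf ω hω) hc₀

theorem IsSuperhedge.upAdd (hE : ∀ n, IsOPC (E n)) (hS : IsSuperhedge E ξ s S)
    (hT : IsSuperhedge E η s T) :
    IsSuperhedge E (fun ω => upAdd (ξ ω) (η ω)) s (fun t => upAdd (S t) (T t)) where
  isSupermartingale := hS.isSupermartingale.upAdd hE hT.isSupermartingale
  bddBelowFn := hS.bddBelowFn.upAdd hT.bddBelowFn
  le_liminf ω hω := (upAdd_mono (hS.le_liminf ω hω) (hT.le_liminf ω hω)).trans
    (upAdd_liminf_le (hS.bddBelowFn.liminf_comp_ne_bot _ _)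
      (hT.bddBelowFn.liminf_comp_ne_bot _ _))

theorem IsSuperhedge.eseries (hE : ∀ n, IsSuperexpectation (E n)) {ξ : ℕ → (ℕ → X) → EReal}
    {S : ℕ → List X → EReal} (hS : ∀ k, IsSuperhedge E (ξ k) s (S k)) (hS₀ : ∀ k t, 0 ≤ S k t) :
    IsSuperhedge E (fun ω => eseries fun k => ξ k ω) s (fun t => eseries fun k => S k t) where
  isSupermartingale := .eseries hE (fun k => (hS k).isSupermartingale) hS₀
  bddBelowFn := ⟨0, fun _ => eseries_nonneg _⟩
  le_liminf ω hω := (eseries_mono fun k => (hS k).le_liminf ω hω).trans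
    (eseries_liminf_le_liminf_eseries fun k n => S k (pre ω n))

theorem IsSuperhedge.topOutside (hS : IsSuperhedge E ξ s S) :
    IsSuperhedge E ξ s (topOutside s S) where
  isSupermartingale := hS.isSupermartingale.topOutside s
  bddBelowFn := hS.bddBelowFn.imp fun _ hc t => (hc t).trans (le_topOutside s S t)
  le_liminf ω hω := (hS.le_liminf ω hω).trans
    (liminf_le_liminf (.of_forall fun n => le_topOutside s S (pre ω n)))

theorem IsSuperhedge.topOutside_nonneg (hE : ∀ n, IsOPC (E n)) (hS : IsSuperhedge E ξ s S)
    (hξ : ∀ ω ∈ Gamma s, 0 ≤ ξ ω) (t : List X) : 0 ≤ GTP.topOutside s S t := by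
  by_cases ht : s <+: t
  · rw [topOutside_of_isPrefix ht]
    exact (hS.of_isPrefix ht).le_of_forall_le hE fun ω hω => hξ ω (Gamma_anti ht hω)
  · exact (topOutside_of_not_isPrefix ht).ge.trans' le_top

end Superhedge

section UpExp

variable {X : Type*} {E : ℕ → (X → EReal) → EReal} {s : List X} {ξ η : (ℕ → X) → EReal} {a : EReal}

theorem IsSuperhedge.upExp_le {S : List X → EReal} (hS : IsSuperhedge E ξ s S) :
    upExp E ξ s ≤ S s :=
  sInf_le ⟨S, hS.isSupermartingale, hS.bddBelowFn, hS.le_liminf, rfl⟩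

theorem le_upExp (h : ∀ S, IsSuperhedge E ξ s S → a ≤ S s) : a ≤ upExp E ξ s := by
  refine le_sInf ?_
  rintro _ ⟨S, hS, hb, hl, rfl⟩
  exact h S ⟨hS, hb, hl⟩

theorem exists_isSuperhedge_lt (h : upExp E ξ s < a) : ∃ S, IsSuperhedge E ξ s S ∧ S s < a := by
  contrapose! h
  exact le_upExp h

theorem exists_nonneg_isSuperhedge_lt (hE : ∀ n, IsOPC (E n)) (hξ : ∀ ω ∈ Gamma s, 0 ≤ ξ ω)
    (h : upExp E ξ s < a) : ∃ S, IsSuperhedge E ξ s S ∧ (∀ t, 0 ≤ S t) ∧ S s < a := by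
  obtain ⟨S, hS, hSa⟩ := exists_isSuperhedge_lt h
  exact ⟨topOutside s S, hS.topOutside, hS.topOutside_nonneg hE hξ,
    (topOutside_of_isPrefix List.prefix_rfl).trans_lt hSa⟩

theorem upExp_mono (h : ∀ ω ∈ Gamma s, ξ ω ≤ η ω) : upExp E ξ s ≤ upExp E η s :=
  le_upExp fun _ hS => (hS.mono h).upExp_le

theorem le_upExp_of_forall_le (hE : ∀ n, IsOPC (E n)) (h : ∀ ω ∈ Gamma s, a ≤ ξ ω) :
    a ≤ upExp E ξ s :=
  le_upExp fun _ hS => hS.le_of_forall_le hE h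

theorem upExp_const (hE : ∀ n, IsOPC (E n)) (c : ℝ) : upExp E (fun _ => (c : EReal)) s = c :=
  (isSuperhedge_const hE s c).upExp_le.antisymm (le_upExp_of_forall_le hE fun _ _ => le_rfl)

theorem upExp_const_mul_le (hE : ∀ n, IsOPC (E n)) {c : ℝ} (hc : 0 < c) :
    upExp E (fun ω => (c : EReal) * ξ ω) s ≤ c * upExp E ξ s := by
  have hc₀ : (0 : EReal) < c := EReal.coe_pos.2 hc
  rw [← EReal.div_le_iff_le_mul hc₀ (EReal.coe_ne_top c)]
  refine le_upExp fun S hS => ?_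
  rw [EReal.div_le_iff_le_mul hc₀ (EReal.coe_ne_top c)]
  exact (hS.const_mul hE hc).upExp_le

theorem upExp_const_mul (hE : ∀ n, IsOPC (E n)) {c : ℝ} (hc : 0 < c) :
    upExp E (fun ω => (c : EReal) * ξ ω) s = c * upExp E ξ s := by
  have cancel : ∀ {d e : ℝ}, d * e = 1 → ∀ b : EReal, (d : EReal) * (e * b) = b := fun h b => by
    rw [← mul_assoc, ← EReal.coe_mul, h, EReal.coe_one, one_mul]
  refine (upExp_const_mul_le hE hc).antisymm ?_
  calc (c : EReal) * upExp E ξ s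
      = c * upExp E (fun ω => (c⁻¹ : ℝ) * ((c : EReal) * ξ ω)) s := by
        simp only [cancel (inv_mul_cancel₀ hc.ne')]
    _ ≤ c * ((c⁻¹ : ℝ) * upExp E (fun ω => (c : EReal) * ξ ω) s) :=
        mul_le_mul_of_nonneg_left (upExp_const_mul_le hE (inv_pos.2 hc)) (EReal.coe_nonneg.2 hc.le)
    _ = upExp E (fun ω => (c : EReal) * ξ ω) s := cancel (mul_inv_cancel₀ hc.ne') _

theorem upExp_upAdd_le (hE : ∀ n, IsOPC (E n)) :
    upExp E (fun ω => upAdd (ξ ω) (η ω)) s ≤ upAdd (upExp E ξ s) (upExp E η s) := by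
  refine le_upAdd_of_forall_gt fun a ha b hb => ?_
  obtain ⟨S, hS, hSa⟩ := exists_isSuperhedge_lt ha
  obtain ⟨T, hT, hTb⟩ := exists_isSuperhedge_lt hb
  exact (hS.upAdd hE hT).upExp_le.trans (upAdd_mono hSa.le hTb.le)

theorem isOPC_upExp (hE : ∀ n, IsOPC (E n)) (s : List X) : IsOPC (fun ξ => upExp E ξ s) :=
  ⟨fun _ _ h => upExp_mono fun ω _ => h ω, fun _ hc _ => upExp_const_mul hE hc,
    fun _ _ => upExp_upAdd_le hE, upExp_const hE⟩

theorem upExp_eseries_le (hE : ∀ n, IsSuperexpectation (E n)) {ξ : ℕ → (ℕ → X) → EReal}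
    (hξ : ∀ k, ∀ ω ∈ Gamma s, 0 ≤ ξ k ω) :
    upExp E (fun ω => eseries fun k => ξ k ω) s ≤ eseries fun k => upExp E (ξ k) s := by
  have hE' : ∀ n, IsOPC (E n) := fun n => (hE n).1
  refine le_of_forall_gt_imp_ge_of_dense fun c hc => ?_
  obtain ⟨b, hb, hbc⟩ :=
    exists_forall_lt_eseries_le (fun k => le_upExp_of_forall_le hE' (hξ k)) hc
  choose S hS hS₀ hSb using fun k => exists_nonneg_isSuperhedge_lt hE' (hξ k) (hb k)
  calc upExp E (fun ω => eseries fun k => ξ k ω) s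
      ≤ eseries fun k => S k s := (IsSuperhedge.eseries hE hS hS₀).upExp_le
    _ ≤ eseries b := eseries_mono fun k => (hSb k).le
    _ ≤ c := hbc

theorem isSuperexpectation_upExp (hE : ∀ n, IsSuperexpectation (E n)) (s : List X) :
    IsSuperexpectation (fun ξ => upExp E ξ s) :=
  ⟨isOPC_upExp (fun n => (hE n).1) s, fun _ hξ => upExp_eseries_le hE fun k ω _ => hξ k ω⟩

end UpExp

section UpProb

variable {X : Type*} {E : ℕ → (X → EReal) → EReal} {s : List X}

theorem upProb_nonneg (hE : ∀ n, IsOPC (E n)) (A : Set (ℕ → X)) : 0 ≤ upProb E A s :=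
  le_upExp_of_forall_le hE fun ω _ => Set.indicator_nonneg (fun _ _ => zero_le_one) ω

theorem upProb_iUnion_le (hE : ∀ n, IsSuperexpectation (E n)) (A : ℕ → Set (ℕ → X)) :
    upProb E (⋃ k, A k) s ≤ eseries fun k => upProb E (A k) s :=
  (upExp_mono fun ω _ => indicator_iUnion_le_eseries A ω).trans
    (upExp_eseries_le hE fun _ ω _ => Set.indicator_nonneg (fun _ _ => zero_le_one) ω)

theorem upProb_iUnion_eq_zero (hE : ∀ n, IsSuperexpectation (E n)) {A : ℕ → Set (ℕ → X)}
    (hA : ∀ k, upProb E (A k) s = 0) : upProb E (⋃ k, A k) s = 0 := by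
  refine ((upProb_iUnion_le hE A).trans ?_).antisymm (upProb_nonneg (fun n => (hE n).1) _)
  simp [hA, eseries]

end UpProb

end GTP

theorem upExp_isSuperexpectation {X : Type*} [Nonempty X]
    (E : ℕ → (X → EReal) → EReal) (hE : ∀ n, GTP.IsSuperexpectation (E n)) (s : List X) :
    GTP.IsSuperexpectation (fun ξ : (ℕ → X) → EReal => GTP.upExp E ξ s) ∧
    (∀ ξ : ℕ → (ℕ → X) → EReal, (∀ k ω, 0 ≤ ξ k ω) →
      GTP.upExp E (fun ω => GTP.eseries fun k => ξ k ω) s ≤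
        GTP.eseries fun k => GTP.upExp E (ξ k) s) ∧
    (∀ A : ℕ → Set (ℕ → X),
      GTP.upProb E (⋃ k, A k) s ≤ GTP.eseries fun k => GTP.upProb E (A k) s) ∧
    (∀ A : ℕ → Set (ℕ → X), (∀ k, GTP.upProb E (A k) s = 0) →
      GTP.upProb E (⋃ k, A k) s = 0) :=
  ⟨GTP.isSuperexpectation_upExp hE s, fun _ hξ => GTP.upExp_eseries_le hE fun k ω _ => hξ k ω,
    GTP.upProb_iUnion_le hE, fun _ hA => GTP.upProb_iUnion_eq_zero hE hA⟩
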